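/- arXiv:2012.14525 — 2 statements merged into one kernel-verified Lean document; each statement's English description precedes it below -/
import Mathlib

section
/- Let X be a finite set of points in ℝ² with the L1 metric. Let (a₁,b₁) and (a₂,b₂) be blue arrows and (c₁,d₁), (c₂,d₂) be red arrows such that ⟨a₁,b₁⟩ = ⟨c₁,d₁⟩, ⟨a₂,b₂⟩ = ⟨c₂,d₂⟩, and ⟨a₁,b₁⟩ ≠ ⟨a₂,b₂⟩. Then {a₁,a₂} and {b₁,b₂} are decreasing pairs, while {c₁,c₂} and {d₁,d₂} are increasing pairs. -/
noncomputable section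
open Classical

/-- The L1 (Manhattan) metric on ℝ². -/
def rho (u v : ℝ × ℝ) : ℝ := |u.1 - v.1| + |u.2 - v.2|

/-- `z` is between `u` and `v` (w.r.t. the L1 metric): the three points are
pairwise distinct and `ρ(u,v) = ρ(u,z) + ρ(z,v)`. -/
def MBtw (u z v : ℝ × ℝ) : Prop :=
  u ≠ z ∧ z ≠ v ∧ u ≠ v ∧ rho u v = rho u z + rho z v

/-- The line of `X` induced by distinct points `u, v`. -/
def lineThrough (X : Finset (ℝ × ℝ)) (u v : ℝ × ℝ) : Finset (ℝ × ℝ) :=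
  X.filter fun z => z = u ∨ z = v ∨ MBtw u z v ∨ MBtw z u v ∨ MBtw u v z

/-- `X` is non-collinear: no line induced by two distinct points of `X` equals `X`. -/
def NonCollinear (X : Finset (ℝ × ℝ)) : Prop :=
  ∀ u ∈ X, ∀ v ∈ X, u ≠ v → lineThrough X u v ≠ X

/-- `{p,q}` is an increasing pair. -/
def IncPair (p q : ℝ × ℝ) : Prop := 0 < (q.1 - p.1) * (q.2 - p.2)

/-- `{p,q}` is a decreasing pair. -/
def DecPair (p q : ℝ × ℝ) : Prop := (q.1 - p.1) * (q.2 - p.2) < 0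

/-- The partial order `≤_I`. -/
def leI (c d : ℝ × ℝ) : Prop := c.1 ≤ d.1 ∧ c.2 ≤ d.2

/-- `c <_I d`. -/
def ltI (c d : ℝ × ℝ) : Prop := leI c d ∧ c ≠ d

/-- The partial order `≤_D`. -/
def leD (c d : ℝ × ℝ) : Prop := c.1 ≤ d.1 ∧ d.2 ≤ c.2

/-- `c <_D d`. -/
def ltD (c d : ℝ × ℝ) : Prop := leD c d ∧ c ≠ d

/-- `(p,q)` is a blue arrow of `X`. -/
def BlueArrow (X : Finset (ℝ × ℝ)) (p q : ℝ × ℝ) : Prop :=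
  p ∈ X ∧ q ∈ X ∧ IncPair p q ∧ ltI p q ∧
  ∀ a b, a ∈ X → b ∈ X → IncPair a b → ltI a b →
    lineThrough X a b = lineThrough X p q → (ltI q b ∨ (q = b ∧ leI a p))

/-- `(p,q)` is a red arrow of `X`. -/
def RedArrow (X : Finset (ℝ × ℝ)) (p q : ℝ × ℝ) : Prop :=
  p ∈ X ∧ q ∈ X ∧ DecPair p q ∧ ltD p q ∧
  ∀ a b, a ∈ X → b ∈ X → DecPair a b → ltD a b →
    lineThrough X a b = lineThrough X p q → (ltD q b ∨ (q = b ∧ leD a p))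

/-- An arrow is a blue or a red arrow. -/
def Arrow (X : Finset (ℝ × ℝ)) (p q : ℝ × ℝ) : Prop :=
  BlueArrow X p q ∨ RedArrow X p q

/-- `a` is not an endpoint of any arrow of `X`. -/
def NotEndpoint (X : Finset (ℝ × ℝ)) (a : ℝ × ℝ) : Prop :=
  ∀ p q, Arrow X p q → a ≠ p ∧ a ≠ q

lemma nr_abs (x y z : ℝ) (h : x ≤ y) :
    |x - y| ≤ |x - z| + |z - y| ∧ (|x - y| = |x - z| + |z - y| ↔ x ≤ z ∧ z ≤ y) := by
  refine ⟨abs_sub_le _ _ _, ?_⟩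
  rw [abs_of_nonpos (by linarith : x - y ≤ 0)]
  constructor
  · intro e
    constructor
    · linarith [neg_abs_le (x - z), neg_abs_le (z - y), le_abs_self (x - z), le_abs_self (z - y)]
    · linarith [neg_abs_le (x - z), neg_abs_le (z - y), le_abs_self (x - z), le_abs_self (z - y)]
  · rintro ⟨h1, h2⟩
    rw [abs_of_nonpos (by linarith : x - z ≤ 0), abs_of_nonpos (by linarith : z - y ≤ 0)]
    ring

lemma nr_abs' (x y z : ℝ) :
    |x - y| ≤ |x - z| + |z - y| ∧
      (|x - y| = |x - z| + |z - y| ↔ (x ≤ z ∧ z ≤ y) ∨ (y ≤ z ∧ z ≤ x)) := by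
  rcases le_total x y with h | h
  · refine ⟨(nr_abs x y z h).1, (nr_abs x y z h).2.trans ?_⟩
    constructor
    · exact Or.inl
    · rintro (h' | ⟨h1, h2⟩)
      · exact h'
      · constructor <;> linarith
  · refine ⟨abs_sub_le _ _ _, ?_⟩
    have := (nr_abs y x z h).2
    rw [abs_sub_comm x y, abs_sub_comm x z, abs_sub_comm z y, add_comm, this]
    constructor
    · exact Or.inr
    · rintro (⟨h1, h2⟩ | h')
      · constructor <;> linarith
      · exact h'

lemma nr_rho (u z v : ℝ × ℝ) : rho u v = rho u z + rho z v ↔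
    ((u.1 ≤ z.1 ∧ z.1 ≤ v.1) ∨ (v.1 ≤ z.1 ∧ z.1 ≤ u.1)) ∧
    ((u.2 ≤ z.2 ∧ z.2 ≤ v.2) ∨ (v.2 ≤ z.2 ∧ z.2 ≤ u.2)) := by
  obtain ⟨h1, h2⟩ := nr_abs' u.1 v.1 z.1
  obtain ⟨h3, h4⟩ := nr_abs' u.2 v.2 z.2
  rw [← h2, ← h4]
  unfold rho
  constructor
  · intro h
    constructor <;> linarith
  · rintro ⟨h, h'⟩
    linarith

lemma nr_line (X : Finset (ℝ × ℝ)) (u v z : ℝ × ℝ) (h : u ≠ v) :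
    z ∈ lineThrough X u v ↔ z ∈ X ∧
      (rho u v = rho u z + rho z v ∨ rho z v = rho z u + rho u v ∨
        rho u z = rho u v + rho v z) := by
  unfold lineThrough
  rw [Finset.mem_filter]
  unfold MBtw
  refine and_congr_right fun _ => ?_
  by_cases h1 : z = u
  · subst h1; simp [rho]
  by_cases h2 : z = v
  · subst h2; simp [rho]
  have h1' : u ≠ z := fun e => h1 e.symm
  have h2' : v ≠ z := fun e => h2 e.symm
  simp [h1, h2, h1', h2', h]

lemma nr_inc (X : Finset (ℝ × ℝ)) (u v z : ℝ × ℝ) (h1 : u.1 < v.1) (h2 : u.2 < v.2) :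
    z ∈ lineThrough X u v ↔ z ∈ X ∧
      ((z.1 ≤ u.1 ∧ z.2 ≤ u.2) ∨ (u.1 ≤ z.1 ∧ z.1 ≤ v.1 ∧ u.2 ≤ z.2 ∧ z.2 ≤ v.2) ∨
        (v.1 ≤ z.1 ∧ v.2 ≤ z.2)) := by
  rw [nr_line X u v z (fun e => by rw [e] at h1; exact lt_irrefl _ h1)]
  rw [nr_rho, nr_rho, nr_rho]
  refine and_congr_right fun _ => ?_
  grind

lemma nr_dec (X : Finset (ℝ × ℝ)) (u v z : ℝ × ℝ) (h1 : u.1 < v.1) (h2 : v.2 < u.2) :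
    z ∈ lineThrough X u v ↔ z ∈ X ∧
      ((z.1 ≤ u.1 ∧ u.2 ≤ z.2) ∨ (u.1 ≤ z.1 ∧ z.1 ≤ v.1 ∧ v.2 ≤ z.2 ∧ z.2 ≤ u.2) ∨
        (v.1 ≤ z.1 ∧ z.2 ≤ v.2)) := by
  rw [nr_line X u v z (fun e => by rw [e] at h1; exact lt_irrefl _ h1)]
  rw [nr_rho, nr_rho, nr_rho]
  refine and_congr_right fun _ => ?_
  grind

/-- A line generated by both an increasing and a decreasing pair is a box with its four corners
in `X`, and the outer quadrants at the corners contain nothing else. -/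
lemma nr_box (X : Finset (ℝ × ℝ)) (a b c d : ℝ × ℝ)
    (hb : BlueArrow X a b) (hr : RedArrow X c d)
    (hl : lineThrough X a b = lineThrough X c d) :
    a ∈ X ∧ b ∈ X ∧ c ∈ X ∧ d ∈ X ∧ a.1 < b.1 ∧ a.2 < b.2 ∧
    c.1 = a.1 ∧ c.2 = b.2 ∧ d.1 = b.1 ∧ d.2 = a.2 ∧
    (∀ z ∈ X, z.1 ≤ a.1 → z.2 ≤ a.2 → z.1 = a.1 ∧ z.2 = a.2) ∧
    (∀ z ∈ X, b.1 ≤ z.1 → b.2 ≤ z.2 → z.1 = b.1 ∧ z.2 = b.2) ∧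
    (∀ z ∈ X, z.1 ≤ a.1 → b.2 ≤ z.2 → z.1 = a.1 ∧ z.2 = b.2) ∧
    (∀ z ∈ X, b.1 ≤ z.1 → z.2 ≤ a.2 → z.1 = b.1 ∧ z.2 = a.2) := by
  obtain ⟨haX, hbX, hi, ⟨⟨hab1, hab2⟩, -⟩, -⟩ := hb
  obtain ⟨hcX, hdX, hd, ⟨⟨hcd1, hcd2⟩, -⟩, -⟩ := hr
  unfold IncPair at hi
  unfold DecPair at hd
  have h1 : a.1 < b.1 := lt_of_le_of_ne hab1 (fun e => by rw [e] at hi; simp at hi)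
  have h2 : a.2 < b.2 := lt_of_le_of_ne hab2 (fun e => by rw [e] at hi; simp at hi)
  have h3 : c.1 < d.1 := lt_of_le_of_ne hcd1 (fun e => by rw [e] at hd; simp at hd)
  have h4 : d.2 < c.2 := lt_of_le_of_ne hcd2 (fun e => by rw [e] at hd; simp at hd)
  have key : ∀ z ∈ X, _ := fun z hz =>
    ((nr_inc X a b z h1 h2).symm.trans (by rw [hl])).trans (nr_dec X c d z h3 h4)
  have ka := key a haX
  have kb := key b hbX
  have kc := key c hcX
  have kd := key d hdX
  simp only [haX, hbX, hcX, hdX, true_and] at ka kb kc kd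
  have hco : c.1 = a.1 ∧ c.2 = b.2 ∧ d.1 = b.1 ∧ d.2 = a.2 := by
    grind
  obtain ⟨e1, e2, e3, e4⟩ := hco
  refine ⟨haX, hbX, hcX, hdX, h1, h2, e1, e2, e3, e4, ?_, ?_, ?_, ?_⟩ <;>
  · intro z hz hz1 hz2
    have kz := key z hz
    simp only [hz, true_and] at kz
    clear ka kb kc kd key
    grind

/-- If blue arrows `(a₁,b₁)`, `(a₂,b₂)` and red arrows `(c₁,d₁)`, `(c₂,d₂)`
satisfy `⟨a₁,b₁⟩ = ⟨c₁,d₁⟩`, `⟨a₂,b₂⟩ = ⟨c₂,d₂⟩` and `⟨a₁,b₁⟩ ≠ ⟨a₂,b₂⟩`, then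
the two rectangles intersect in their middle parts: `{a₁,a₂}` and `{b₁,b₂}` are
decreasing pairs, while `{c₁,c₂}` and `{d₁,d₂}` are increasing pairs. -/
theorem nested_rectangles (X : Finset (ℝ × ℝ)) (a₁ b₁ a₂ b₂ c₁ d₁ c₂ d₂ : ℝ × ℝ)
    (h₁ : BlueArrow X a₁ b₁) (h₂ : BlueArrow X a₂ b₂)
    (h₃ : RedArrow X c₁ d₁) (h₄ : RedArrow X c₂ d₂)
    (hl₁ : lineThrough X a₁ b₁ = lineThrough X c₁ d₁)
    (hl₂ : lineThrough X a₂ b₂ = lineThrough X c₂ d₂)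
    (hne : lineThrough X a₁ b₁ ≠ lineThrough X a₂ b₂) :
    DecPair a₁ a₂ ∧ DecPair b₁ b₂ ∧ IncPair c₁ c₂ ∧ IncPair d₁ d₂ := by
  obtain ⟨A1, B1, C1, D1, x1, y1, e1, f1, g1, i1, p1, q1, r1, s1⟩ := nr_box X a₁ b₁ c₁ d₁ h₁ h₃ hl₁
  obtain ⟨A2, B2, C2, D2, x2, y2, e2, f2, g2, i2, p2, q2, r2, s2⟩ := nr_box X a₂ b₂ c₂ d₂ h₂ h₄ hl₂
  have pa := p1 a₂ A2
  have pa' := p2 a₁ A1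
  have pc := r1 c₂ C2
  have pc' := r2 c₁ C1
  have pd := s1 d₂ D2
  have pd' := s2 d₁ D1
  have hne' : ¬ (a₁.1 = a₂.1 ∧ a₁.2 = a₂.2 ∧ b₁.1 = b₂.1 ∧ b₁.2 = b₂.2) := by
    rintro ⟨u1, u2, u3, u4⟩
    exact hne (by rw [Prod.ext u1 u2, Prod.ext u3 u4])
  have main : (a₁.1 < a₂.1 ∧ a₂.2 < a₁.2 ∧ b₁.2 < b₂.2 ∧ b₂.1 < b₁.1) ∨
      (a₂.1 < a₁.1 ∧ a₁.2 < a₂.2 ∧ b₂.2 < b₁.2 ∧ b₁.1 < b₂.1) := by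
    rw [e2, f2] at pc
    rw [e1, f1] at pc'
    rw [g2, i2] at pd
    rw [g1, i1] at pd'
    clear p1 q1 r1 s1 p2 q2 r2 s2 hne h₁ h₂ h₃ h₄ hl₁ hl₂
    grind
  unfold DecPair IncPair
  rw [e1, e2, f1, f2, g1, g2, i1, i2]
  rcases main with ⟨m1, m2, m3, m4⟩ | ⟨m1, m2, m3, m4⟩
  · refine ⟨?_, ?_, ?_, ?_⟩ <;> nlinarith
  · refine ⟨?_, ?_, ?_, ?_⟩ <;> nlinarith
end
end

section
/- Let X be a finite non-collinear set of points in ℝ² with the L1 metric. Let k ≥ 2 and for i = 1,…,k let (aᵢ,bᵢ) be blue arrows and (cᵢ,dᵢ) be red arrows such that ⟨aᵢ,bᵢ⟩ = ⟨cᵢ,dᵢ⟩ for each i and the lines ⟨a₁,b₁⟩, …, ⟨a_k,b_k⟩ are pairwise distinct. Then for each i there exists q ∈ X with q ≠ bᵢ such that (aᵢ,q) is an arrow, and there exists q' ∈ X with q' ≠ dᵢ such that (cᵢ,q') is an arrow. -/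
noncomputable section
open Classical

theorem abs_btw (a z b : ℝ) :
    |a - b| = |a - z| + |z - b| ↔ (a ≤ z ∧ z ≤ b) ∨ (b ≤ z ∧ z ≤ a) := by
  constructor
  · intro h
    rcases abs_cases (a - b) with ⟨h1, h1'⟩ | ⟨h1, h1'⟩ <;>
    rcases abs_cases (a - z) with ⟨h2, h2'⟩ | ⟨h2, h2'⟩ <;>
    rcases abs_cases (z - b) with ⟨h3, h3'⟩ | ⟨h3, h3'⟩ <;>
    rw [h1, h2, h3] at h <;> first
      | (left; constructor <;> linarith)
      | (right; constructor <;> linarith)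
  · rintro (⟨h1, h2⟩ | ⟨h1, h2⟩)
    · rw [abs_of_nonpos (by linarith), abs_of_nonpos (by linarith), abs_of_nonpos (by linarith)]
      ring
    · rw [abs_of_nonneg (by linarith), abs_of_nonneg (by linarith), abs_of_nonneg (by linarith)]
      ring

/-- Weak betweenness in coordinates. -/
def WB (u z v : ℝ × ℝ) : Prop :=
  ((u.1 ≤ z.1 ∧ z.1 ≤ v.1) ∨ (v.1 ≤ z.1 ∧ z.1 ≤ u.1)) ∧
  ((u.2 ≤ z.2 ∧ z.2 ≤ v.2) ∨ (v.2 ≤ z.2 ∧ z.2 ≤ u.2))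

theorem rho_btw (u z v : ℝ × ℝ) : rho u v = rho u z + rho z v ↔ WB u z v := by
  unfold rho WB
  rw [← abs_btw, ← abs_btw]
  have h1 := abs_sub_le u.1 z.1 v.1
  have h2 := abs_sub_le u.2 z.2 v.2
  constructor
  · intro h
    constructor <;> linarith
  · rintro ⟨h, h'⟩
    linarith

theorem mem_line (X : Finset (ℝ × ℝ)) (u v z : ℝ × ℝ) (huv : u ≠ v) :
    z ∈ lineThrough X u v ↔ z ∈ X ∧ (WB u z v ∨ WB z u v ∨ WB u v z) := by
  unfold lineThrough
  rw [Finset.mem_filter]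
  unfold MBtw
  simp only [rho_btw]
  by_cases h1 : z = u
  · subst h1
    have : WB z z v := by
      unfold WB
      constructor
      · rcases le_total z.1 v.1 with h | h <;> simp [h]
      · rcases le_total z.2 v.2 with h | h <;> simp [h]
    simp [this]
  by_cases h2 : z = v
  · subst h2
    have : WB u z z := by
      unfold WB
      constructor
      · rcases le_total u.1 z.1 with h | h <;> simp [h]
      · rcases le_total u.2 z.2 with h | h <;> simp [h]
    simp [this]
  have h1' : u ≠ z := fun h => h1 h.symm
  have h2' : v ≠ z := fun h => h2 h.symm
  simp [h1, h2, h1', h2', huv]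

theorem mem_lineI (X : Finset (ℝ × ℝ)) (p q z : ℝ × ℝ) (h1 : p.1 < q.1) (h2 : p.2 < q.2) :
    z ∈ lineThrough X p q ↔ z ∈ X ∧ ((z.1 ≤ p.1 ∧ z.2 ≤ p.2) ∨
      (p.1 ≤ z.1 ∧ p.2 ≤ z.2 ∧ z.1 ≤ q.1 ∧ z.2 ≤ q.2) ∨ (q.1 ≤ z.1 ∧ q.2 ≤ z.2)) := by
  rw [mem_line X p q z (by rintro rfl; exact lt_irrefl _ h1)]
  unfold WB
  constructor
  · rintro ⟨h, h'⟩
    refine ⟨h, ?_⟩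
    grind
  · rintro ⟨h, h'⟩
    refine ⟨h, ?_⟩
    grind

theorem mem_lineD (X : Finset (ℝ × ℝ)) (p q z : ℝ × ℝ) (h1 : p.1 < q.1) (h2 : q.2 < p.2) :
    z ∈ lineThrough X p q ↔ z ∈ X ∧ ((z.1 ≤ p.1 ∧ p.2 ≤ z.2) ∨
      (p.1 ≤ z.1 ∧ z.2 ≤ p.2 ∧ z.1 ≤ q.1 ∧ q.2 ≤ z.2) ∨ (q.1 ≤ z.1 ∧ z.2 ≤ q.2)) := by
  rw [mem_line X p q z (by rintro rfl; exact lt_irrefl _ h1)]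
  unfold WB
  constructor
  · rintro ⟨h, h'⟩
    refine ⟨h, ?_⟩
    grind
  · rintro ⟨h, h'⟩
    refine ⟨h, ?_⟩
    grind

/-- Horizontal lines in non-collinear sets miss some point. -/
theorem nc_hor {X : Finset (ℝ × ℝ)} (hnc : NonCollinear X) {p q : ℝ × ℝ} (hp : p ∈ X)
    (hq : q ∈ X) (h1 : p.1 < q.1) (h2 : q.2 = p.2) :
    ∃ z ∈ X, p.1 < z.1 ∧ z.1 < q.1 ∧ z.2 ≠ p.2 := by
  by_contra! H
  have hne : p ≠ q := by rintro rfl; exact lt_irrefl _ h1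
  apply hnc p hp q hq hne
  ext z
  rw [mem_line X p q z hne]
  refine ⟨fun h => h.1, fun h => ⟨h, ?_⟩⟩
  have := H z h
  unfold WB
  grind

theorem nc_ver {X : Finset (ℝ × ℝ)} (hnc : NonCollinear X) {p q : ℝ × ℝ} (hp : p ∈ X)
    (hq : q ∈ X) (h1 : p.2 < q.2) (h2 : q.1 = p.1) :
    ∃ z ∈ X, p.2 < z.2 ∧ z.2 < q.2 ∧ z.1 ≠ p.1 := by
  by_contra! H
  have hne : p ≠ q := by rintro rfl; exact lt_irrefl _ h1
  apply hnc p hp q hq hne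
  ext z
  rw [mem_line X p q z hne]
  refine ⟨fun h => h.1, fun h => ⟨h, ?_⟩⟩
  have := H z h
  unfold WB
  grind

theorem incLt_iff (p q : ℝ × ℝ) : (IncPair p q ∧ ltI p q) ↔ (p.1 < q.1 ∧ p.2 < q.2) := by
  unfold IncPair ltI leI
  constructor
  · rintro ⟨h, ⟨h1, h2⟩, -⟩
    constructor
    · rcases h1.lt_or_eq with h3 | h3
      · exact h3
      · rw [h3] at h; simp at h
    · rcases h2.lt_or_eq with h3 | h3
      · exact h3
      · rw [h3] at h; simp at h
  · rintro ⟨h1, h2⟩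
    exact ⟨mul_pos (by linarith) (by linarith), ⟨h1.le, h2.le⟩,
      by rintro rfl; exact lt_irrefl _ h1⟩

theorem decLt_iff (p q : ℝ × ℝ) : (DecPair p q ∧ ltD p q) ↔ (p.1 < q.1 ∧ q.2 < p.2) := by
  unfold DecPair ltD leD
  constructor
  · rintro ⟨h, ⟨h1, h2⟩, -⟩
    constructor
    · rcases h1.lt_or_eq with h3 | h3
      · exact h3
      · rw [h3] at h; simp at h
    · rcases h2.lt_or_eq with h3 | h3
      · exact h3
      · rw [h3] at h; simp at h
  · rintro ⟨h1, h2⟩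
    exact ⟨mul_neg_of_pos_of_neg (by linarith) (by linarith), ⟨h1.le, h2.le⟩,
      by rintro rfl; exact lt_irrefl _ h1⟩

/-! ### Reflection in the horizontal axis -/

def refl2 (p : ℝ × ℝ) : ℝ × ℝ := (p.1, -p.2)

theorem refl2_refl2 (p : ℝ × ℝ) : refl2 (refl2 p) = p := by simp [refl2]

theorem refl2_inj {p q : ℝ × ℝ} : refl2 p = refl2 q ↔ p = q := by
  constructor
  · intro h
    rw [← refl2_refl2 p, h, refl2_refl2]
  · rintro rfl; rfl

def reflX (X : Finset (ℝ × ℝ)) : Finset (ℝ × ℝ) := X.image refl2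

theorem mem_reflX {X : Finset (ℝ × ℝ)} {p : ℝ × ℝ} : p ∈ reflX X ↔ refl2 p ∈ X := by
  unfold reflX
  rw [Finset.mem_image]
  constructor
  · rintro ⟨q, hq, rfl⟩
    rwa [refl2_refl2]
  · intro h
    exact ⟨_, h, refl2_refl2 p⟩

theorem reflX_reflX (X : Finset (ℝ × ℝ)) : reflX (reflX X) = X := by
  ext p
  rw [mem_reflX, mem_reflX, refl2_refl2]

theorem WB_refl2 (u z v : ℝ × ℝ) : WB (refl2 u) (refl2 z) (refl2 v) ↔ WB u z v := by
  unfold WB refl2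
  simp only [neg_le_neg_iff]
  tauto

theorem line_refl (X : Finset (ℝ × ℝ)) (u v : ℝ × ℝ) (h : u ≠ v) :
    lineThrough (reflX X) (refl2 u) (refl2 v) = reflX (lineThrough X u v) := by
  ext z
  rw [mem_reflX, mem_line _ _ _ _ (by rwa [Ne, refl2_inj]), mem_line _ _ _ _ h, mem_reflX]
  have h1 := WB_refl2 u (refl2 z) v
  have h2 := WB_refl2 (refl2 z) u v
  have h3 := WB_refl2 u v (refl2 z)
  rw [refl2_refl2] at h1 h2 h3
  rw [h1, h2, h3]

theorem nc_refl {X : Finset (ℝ × ℝ)} (h : NonCollinear X) : NonCollinear (reflX X) := by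
  intro u hu v hv huv he
  rw [mem_reflX] at hu hv
  have hne : refl2 u ≠ refl2 v := by rwa [Ne, refl2_inj]
  apply h _ hu _ hv hne
  have := line_refl X _ _ hne
  rw [refl2_refl2, refl2_refl2, he] at this
  rw [← reflX_reflX (lineThrough X _ _), ← this, reflX_reflX]

/-- Coordinate form of blue arrows. -/
theorem blue_iff (X : Finset (ℝ × ℝ)) (p q : ℝ × ℝ) : BlueArrow X p q ↔
    p ∈ X ∧ q ∈ X ∧ (p.1 < q.1 ∧ p.2 < q.2) ∧
    ∀ a b, a ∈ X → b ∈ X → (a.1 < b.1 ∧ a.2 < b.2) → lineThrough X a b = lineThrough X p q →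
      (ltI q b ∨ (q = b ∧ leI a p)) := by
  unfold BlueArrow
  rw [← incLt_iff]
  simp only [← incLt_iff, and_assoc, and_imp]

theorem red_iff (X : Finset (ℝ × ℝ)) (p q : ℝ × ℝ) : RedArrow X p q ↔
    p ∈ X ∧ q ∈ X ∧ (p.1 < q.1 ∧ q.2 < p.2) ∧
    ∀ a b, a ∈ X → b ∈ X → (a.1 < b.1 ∧ b.2 < a.2) → lineThrough X a b = lineThrough X p q →
      (ltD q b ∨ (q = b ∧ leD a p)) := by
  unfold RedArrow
  rw [← decLt_iff]
  simp only [← decLt_iff, and_assoc, and_imp]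

theorem leD_refl2 (p q : ℝ × ℝ) : leD (refl2 p) (refl2 q) ↔ leI p q := by
  simp [leD, leI, refl2]

theorem leI_refl2 (p q : ℝ × ℝ) : leI (refl2 p) (refl2 q) ↔ leD p q := by
  simp [leD, leI, refl2]

theorem red_of_blue {X : Finset (ℝ × ℝ)} {p q : ℝ × ℝ} (h : BlueArrow X p q) :
    RedArrow (reflX X) (refl2 p) (refl2 q) := by
  rw [blue_iff] at h
  rw [red_iff]
  obtain ⟨hp, hq, hlt, H⟩ := h
  refine ⟨by rwa [mem_reflX, refl2_refl2], by rwa [mem_reflX, refl2_refl2],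
    by simpa [refl2] using hlt, ?_⟩
  intro a b ha hb hab he
  have hne : p ≠ q := by rintro rfl; exact lt_irrefl _ hlt.1
  have hne' : a ≠ b := by rintro rfl; exact lt_irrefl _ hab.1
  rw [line_refl X p q hne] at he
  have h1 := line_refl (reflX X) a b hne'
  rw [he, reflX_reflX, reflX_reflX] at h1
  have := H (refl2 a) (refl2 b) (mem_reflX.1 ha) (mem_reflX.1 hb) (by simpa [refl2] using hab) h1
  unfold ltI at this
  unfold ltD
  rw [← leD_refl2, ← leD_refl2, refl2_refl2, refl2_refl2] at this
  rcases this with ⟨h2, h3⟩ | ⟨h2, h3⟩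
  · left
    refine ⟨h2, ?_⟩
    rintro rfl
    exact h3 (refl2_refl2 q).symm
  · right
    refine ⟨?_, h3⟩
    rw [h2, refl2_refl2]

theorem blue_of_red {X : Finset (ℝ × ℝ)} {p q : ℝ × ℝ} (h : RedArrow X p q) :
    BlueArrow (reflX X) (refl2 p) (refl2 q) := by
  rw [red_iff] at h
  rw [blue_iff]
  obtain ⟨hp, hq, hlt, H⟩ := h
  refine ⟨by rwa [mem_reflX, refl2_refl2], by rwa [mem_reflX, refl2_refl2],
    by simpa [refl2] using hlt, ?_⟩
  intro a b ha hb hab he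
  have hne : p ≠ q := by rintro rfl; exact lt_irrefl _ hlt.1
  have hne' : a ≠ b := by rintro rfl; exact lt_irrefl _ hab.1
  rw [line_refl X p q hne] at he
  have h1 := line_refl (reflX X) a b hne'
  rw [he, reflX_reflX, reflX_reflX] at h1
  have := H (refl2 a) (refl2 b) (mem_reflX.1 ha) (mem_reflX.1 hb) (by simpa [refl2] using hab) h1
  unfold ltD at this
  unfold ltI
  rw [← leI_refl2, ← leI_refl2, refl2_refl2, refl2_refl2] at this
  rcases this with ⟨h2, h3⟩ | ⟨h2, h3⟩
  · left
    refine ⟨h2, ?_⟩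
    rintro rfl
    exact h3 (refl2_refl2 q).symm
  · right
    refine ⟨?_, h3⟩
    rw [h2, refl2_refl2]

theorem arrow_refl {X : Finset (ℝ × ℝ)} {p q : ℝ × ℝ} (h : Arrow (reflX X) (refl2 p) q) :
    Arrow X p (refl2 q) := by
  rcases h with h | h
  · right
    have := red_of_blue h
    rwa [reflX_reflX, refl2_refl2] at this
  · left
    have := blue_of_red h
    rwa [reflX_reflX, refl2_refl2] at this

/-! ### Existence of arrows -/

theorem exists_blue0 {X : Finset (ℝ × ℝ)} {p q : ℝ × ℝ} (hp : p ∈ X) (hq : q ∈ X)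
    (h1 : p.1 < q.1) (h2 : p.2 < q.2) :
    ∃ p' q', BlueArrow X p' q' ∧ lineThrough X p' q' = lineThrough X p q := by
  let S := (X ×ˢ X).filter fun w => (w.1.1 < w.2.1 ∧ w.1.2 < w.2.2) ∧
    lineThrough X w.1 w.2 = lineThrough X p q
  have hS : ∀ w, w ∈ S ↔ (w.1 ∈ X ∧ w.2 ∈ X) ∧ (w.1.1 < w.2.1 ∧ w.1.2 < w.2.2) ∧
    lineThrough X w.1 w.2 = lineThrough X p q := by
    intro w
    simp only [S, Finset.mem_filter, Finset.mem_product]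
  have hne : S.Nonempty := ⟨(p, q), (hS _).2 ⟨⟨hp, hq⟩, ⟨h1, h2⟩, rfl⟩⟩
  obtain ⟨w, hw, hwmin⟩ := S.exists_min_image (fun w => w.2.1 + w.2.2) hne
  let T := S.filter fun v => v.2 = w.2
  have hT : ∀ v, v ∈ T ↔ v ∈ S ∧ v.2 = w.2 := by
    intro v
    simp only [T, Finset.mem_filter]
  obtain ⟨v, hv, hvmax⟩ := T.exists_max_image (fun w => w.1.1 + w.1.2) ⟨w, (hT w).2 ⟨hw, rfl⟩⟩
  obtain ⟨hvS, hvw⟩ := (hT v).1 hv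
  obtain ⟨⟨hv1, hv2⟩, hlt, hl⟩ := (hS v).1 hvS
  refine ⟨v.1, v.2, ?_, hl⟩
  rw [blue_iff]
  refine ⟨hv1, hv2, hlt, ?_⟩
  intro a b ha hb hab he
  have habS : (a, b) ∈ S := (hS _).2 ⟨⟨ha, hb⟩, hab, he.trans hl⟩
  have hm := hwmin _ habS
  have ma : a ∈ lineThrough X v.1 v.2 := by
    rw [← he, mem_lineI X a b a hab.1 hab.2]
    exact ⟨ha, Or.inl ⟨le_rfl, le_rfl⟩⟩
  have mb : b ∈ lineThrough X v.1 v.2 := by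
    rw [← he, mem_lineI X a b b hab.1 hab.2]
    exact ⟨hb, Or.inr (Or.inr ⟨le_rfl, le_rfl⟩)⟩
  rw [mem_lineI X _ _ _ hlt.1 hlt.2] at ma mb
  obtain ⟨-, ma⟩ := ma
  obtain ⟨-, mb⟩ := mb
  rw [← hvw] at hm
  simp only at hm
  by_cases hb2 : v.2 = b
  · right
    refine ⟨hb2, ?_⟩
    have := hvmax (a, b) ((hT _).2 ⟨habS, by rw [← hvw, hb2]⟩)
    simp only at this
    unfold leI
    constructor
    · by_contra! hc
      grind
    · by_contra! hc
      grind
  · left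
    refine ⟨?_, hb2⟩
    unfold leI
    constructor
    · by_contra! hc
      grind
    · by_contra! hc
      grind

/-- Position of a point on an increasing line. -/
def OnI (p q z : ℝ × ℝ) : Prop := (z.1 ≤ p.1 ∧ z.2 ≤ p.2) ∨
      (p.1 ≤ z.1 ∧ p.2 ≤ z.2 ∧ z.1 ≤ q.1 ∧ z.2 ≤ q.2) ∨ (q.1 ≤ z.1 ∧ q.2 ≤ z.2)

def OnD (p q z : ℝ × ℝ) : Prop := (z.1 ≤ p.1 ∧ p.2 ≤ z.2) ∨
      (p.1 ≤ z.1 ∧ z.2 ≤ p.2 ∧ z.1 ≤ q.1 ∧ q.2 ≤ z.2) ∨ (q.1 ≤ z.1 ∧ z.2 ≤ q.2)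

/-- The blue arrow of the line `⟨p,q⟩`. -/
theorem exists_blue {X : Finset (ℝ × ℝ)} {p q : ℝ × ℝ} (hp : p ∈ X) (hq : q ∈ X)
    (h1 : p.1 < q.1) (h2 : p.2 < q.2) :
    ∃ p' q', BlueArrow X p' q' ∧ p' ∈ X ∧ q' ∈ X ∧ p'.1 < q'.1 ∧ p'.2 < q'.2 ∧
      q'.1 ≤ q.1 ∧ q'.2 ≤ q.2 ∧ (∀ z ∈ X, OnI p' q' z ↔ OnI p q z) ∧
      (p.1 < q'.1 → p.2 < q'.2 → p.1 ≤ p'.1 ∧ p.2 ≤ p'.2) := by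
  obtain ⟨p', q', hb, hl⟩ := exists_blue0 hp hq h1 h2
  have hb' := hb
  rw [blue_iff] at hb'
  obtain ⟨hp', hq', ⟨h3, h4⟩, H⟩ := hb'
  have hq3 := H p q hp hq ⟨h1, h2⟩ hl.symm
  have hq4 : q'.1 ≤ q.1 ∧ q'.2 ≤ q.2 := by
    rcases hq3 with ⟨h, -⟩ | ⟨rfl, -⟩
    · exact h
    · exact ⟨le_rfl, le_rfl⟩
  have key : ∀ z ∈ X, OnI p' q' z ↔ OnI p q z := by
    intro z hz
    have e1 := mem_lineI X p' q' z h3 h4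
    have e2 := mem_lineI X p q z h1 h2
    rw [hl] at e1
    have e3 := e1.symm.trans e2
    simpa [hz, OnI] using e3
  refine ⟨p', q', hb, hp', hq', h3, h4, hq4.1, hq4.2, key, ?_⟩
  intro h5 h6
  by_contra hcon
  have kp := key p hp
  have kp' := key p' hp'
  have hpp : p'.1 ≤ p.1 ∧ p'.2 ≤ p.2 := by
    unfold OnI at kp kp'
    grind
  have hl2 : lineThrough X p q' = lineThrough X p' q' := by
    ext z
    rw [mem_lineI X p q' z h5 h6, mem_lineI X p' q' z h3 h4]
    constructor
    · rintro ⟨hz, h⟩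
      refine ⟨hz, ?_⟩
      have := key z hz
      unfold OnI at this
      grind
    · rintro ⟨hz, h⟩
      refine ⟨hz, ?_⟩
      have := key z hz
      unfold OnI at this
      grind
  rcases H p q' hp hq' ⟨h5, h6⟩ hl2 with h | h
  · exact h.2 rfl
  · exact hcon h.2

theorem exists_red {X : Finset (ℝ × ℝ)} {p q : ℝ × ℝ} (hp : p ∈ X) (hq : q ∈ X)
    (h1 : p.1 < q.1) (h2 : q.2 < p.2) :
    ∃ p' q', RedArrow X p' q' ∧ p' ∈ X ∧ q' ∈ X ∧ p'.1 < q'.1 ∧ q'.2 < p'.2 ∧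
      q'.1 ≤ q.1 ∧ q.2 ≤ q'.2 ∧ (∀ z ∈ X, OnD p' q' z ↔ OnD p q z) ∧
      (p.1 < q'.1 → q'.2 < p.2 → p.1 ≤ p'.1 ∧ p'.2 ≤ p.2) := by
  have hp2 : refl2 p ∈ reflX X := by rwa [mem_reflX, refl2_refl2]
  have hq2 : refl2 q ∈ reflX X := by rwa [mem_reflX, refl2_refl2]
  obtain ⟨p', q', hb, hp', hq', h3, h4, h5, h6, h7, h8⟩ :=
    exists_blue hp2 hq2 (by simpa [refl2] using h1) (by simpa [refl2] using h2)
  have hr := red_of_blue hb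
  rw [reflX_reflX] at hr
  refine ⟨refl2 p', refl2 q', hr, mem_reflX.1 hp', mem_reflX.1 hq', ?_, ?_, ?_, ?_, ?_, ?_⟩
  · simpa [refl2] using h3
  · simpa [refl2] using h4
  · simpa [refl2] using h5
  · simp only [refl2] at h6 ⊢; linarith
  · intro z hz
    have := h7 (refl2 z) (by rwa [mem_reflX, refl2_refl2])
    unfold OnI at this
    unfold OnD
    simp only [refl2] at this ⊢
    grind
  · simp only [refl2] at h8 ⊢
    grind

/-! ### Rectangles -/

/-- `a, b, c, d` are corners of a rectangle and the closed outer quadrants at the corners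
contain no further points of `X`. -/
structure Rect (X : Finset (ℝ × ℝ)) (a b c d : ℝ × ℝ) : Prop where
  ha : a ∈ X
  hb : b ∈ X
  hc : c ∈ X
  hd : d ∈ X
  c1 : c.1 = a.1
  c2 : c.2 = b.2
  d1 : d.1 = b.1
  d2 : d.2 = a.2
  lt1 : a.1 < b.1
  lt2 : a.2 < b.2
  sw : ∀ z ∈ X, z.1 ≤ a.1 → z.2 ≤ a.2 → z.1 = a.1 ∧ z.2 = a.2
  ne : ∀ z ∈ X, b.1 ≤ z.1 → b.2 ≤ z.2 → z.1 = b.1 ∧ z.2 = b.2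
  nw : ∀ z ∈ X, z.1 ≤ a.1 → b.2 ≤ z.2 → z.1 = a.1 ∧ z.2 = b.2
  se : ∀ z ∈ X, b.1 ≤ z.1 → z.2 ≤ a.2 → z.1 = b.1 ∧ z.2 = a.2

section RectSection

variable {X : Finset (ℝ × ℝ)} {a b c d : ℝ × ℝ}

theorem blue_from (R : Rect X a b c d) {u : ℝ × ℝ} (hu : u ∈ X) (h1 : a.1 < u.1)
    (h2 : a.2 < u.2) :
    ∃ p q, BlueArrow X p q ∧ p ∈ X ∧ q ∈ X ∧ p.1 < q.1 ∧ p.2 < q.2 ∧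
      q.1 ≤ u.1 ∧ q.2 ≤ u.2 ∧ (∀ z ∈ X, OnI p q z ↔ OnI a u z) ∧ a.1 ≤ p.1 ∧ a.2 ≤ p.2 := by
  obtain ⟨p, q, hb, hp, hq, h3, h4, h5, h6, key, -⟩ := exists_blue R.ha hu h1 h2
  have k := key a R.ha
  have s := R.sw p hp
  refine ⟨p, q, hb, hp, hq, h3, h4, h5, h6, key, ?_⟩
  unfold OnI at k
  grind

theorem done_blue {p q : ℝ × ℝ} (h : BlueArrow X p q) (h1 : p.1 = a.1) (h2 : p.2 = a.2)
    (hq : q.1 < b.1 ∨ q.2 < b.2) : ∃ q ∈ X, q ≠ b ∧ Arrow X a q := by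
  have : p = a := Prod.ext h1 h2
  subst this
  refine ⟨q, h.2.1, ?_, Or.inl h⟩
  rintro rfl
  rcases hq with h | h <;> exact lt_irrefl _ h

theorem red_step (R : Rect X a b c d) {s0 : ℝ × ℝ} (hs0 : s0 ∈ X) (h1 : a.1 < s0.1)
    (h2 : s0.1 < b.1) (h3 : s0.2 < a.2) :
    (∃ q ∈ X, q ≠ b ∧ Arrow X a q) ∨ ∃ e ∈ X, e.2 = a.2 ∧ a.1 < e.1 ∧ e.1 < b.1 ∧
      ∀ z ∈ X, a.1 < z.1 → z.1 ≤ e.1 → z.2 ≤ a.2 := by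
  obtain ⟨s, hs, hmax⟩ := (X.filter fun z => a.1 < z.1 ∧ z.1 < b.1 ∧ z.2 < a.2).exists_max_image
    (fun z => z.2) ⟨s0, by simp [hs0, h1, h2, h3]⟩
  simp only [Finset.mem_filter, and_imp] at hs hmax
  obtain ⟨hsX, hs1, hs2, hs3⟩ := hs
  obtain ⟨p, q, hr, hp, hq, h4, h5, h6, h7, key, hge⟩ := exists_red R.ha hsX hs1 hs3
  obtain ⟨ha, hb, hc, hd, c1, c2, d1, d2, lt1, lt2, sw, ne, nw, se⟩ := R
  have ka := key a ha
  have kc := key c hc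
  have kd := key d hd
  unfold OnD at ka kc kd
  have hq1 : a.1 ≤ q.1 ∧ q.2 ≤ a.2 := by
    have := nw p hp
    have := nw q hq
    by_contra hcon
    grind
  have hq2 : q.2 < a.2 := by
    by_contra hcon
    grind
  have hq3 : a.1 < q.1 := by
    have := sw q hq
    by_contra hcon
    grind
  obtain ⟨g1, g2⟩ := hge hq3 hq2
  by_cases hpa : p = a
  · left
    subst hpa
    refine ⟨q, hq, ?_, Or.inr hr⟩
    rintro rfl
    linarith
  right
  have hp2 : p.2 = a.2 := by
    by_contra hcon
    have := sw p hp
    have := hmax p hp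
    grind
  have hp1 : a.1 < p.1 := by
    rcases g1.lt_or_eq with h | h
    · exact h
    · exact absurd (Prod.ext h.symm hp2) hpa
  refine ⟨p, hp, hp2, hp1, by linarith, ?_⟩
  intro z hz z1 z2
  by_contra! hcon
  have := key z hz
  unfold OnD at this
  grind

theorem case_SN (R : Rect X a b c d) {s0 r0 : ℝ × ℝ} (hs0 : s0 ∈ X) (h1 : a.1 < s0.1)
    (h2 : s0.1 < b.1) (h3 : s0.2 < a.2) (hr0 : r0 ∈ X) (h4 : a.1 < r0.1)
    (h5 : r0.1 < b.1) (h6 : b.2 < r0.2) : ∃ q ∈ X, q ≠ b ∧ Arrow X a q := by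
  rcases red_step R hs0 h1 h2 h3 with h | ⟨e, he, e2, e1, e1', hz⟩
  · exact h
  obtain ⟨r, hr, hmin⟩ := (X.filter fun z => a.1 < z.1 ∧ z.1 < b.1 ∧ b.2 < z.2).exists_min_image
    (fun z => z.2) ⟨r0, by simp [hr0, h4, h5, h6]⟩
  simp only [Finset.mem_filter, and_imp] at hr hmin
  obtain ⟨hrX, hr1, hr2, hr3⟩ := hr
  have lt2 := R.lt2
  have hre := hz r hrX hr1
  obtain ⟨p, q, hbl, hp, hq, h7, h8, h9, h10, key, g1, g2⟩ :=
    blue_from R hrX hr1 (by linarith)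
  by_cases hpa : p.1 = a.1 ∧ p.2 = a.2
  · exact done_blue hbl hpa.1 hpa.2 (Or.inl (by linarith))
  have hf : p.2 = b.2 ∧ e.1 ≤ p.1 := by
    obtain ⟨ha, hb, hc, hd, c1, c2, d1, d2, lt1, lt2, sw, ne, nw, se⟩ := R
    have kc := key c hc
    have ke := key e he
    unfold OnI at kc ke
    have := nw p hp
    have := hmin p hp
    clear hz hmin key sw ne se nw
    have : e.1 ≤ p.1 := by
      by_contra hcon
      grind
    have : b.2 ≤ p.2 := by
      by_contra hcon
      grind
    grind
  obtain ⟨f2, f1⟩ := hf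
  obtain ⟨p', q', hbl', hp', hq', h7', h8', h9', h10', key', g1', g2'⟩ :=
    blue_from R hp (by linarith) (by linarith)
  have kc := key' c R.hc
  have ke := key' e he
  have c1 := R.c1
  have c2 := R.c2
  unfold OnI at kc ke
  clear key key' hz hmin
  have e1 : p'.1 = a.1 := by grind
  have e2 : p'.2 = a.2 := by grind
  exact done_blue hbl' e1 e2 (Or.inl (by linarith))

theorem case_SE (hnc : NonCollinear X) (R : Rect X a b c d) {s0 r0 : ℝ × ℝ} (hs0 : s0 ∈ X)
    (h1 : a.1 < s0.1) (h2 : s0.1 < b.1) (h3 : s0.2 < a.2) (hr0 : r0 ∈ X) (h4 : b.1 < r0.1)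
    (h5 : a.2 < r0.2) (h6 : r0.2 < b.2) : ∃ q ∈ X, q ≠ b ∧ Arrow X a q := by
  rcases red_step R hs0 h1 h2 h3 with h | ⟨e, he, e2, e1, e1', hz⟩
  · exact h
  obtain ⟨r, hr, hmin⟩ := (X.filter fun z => b.1 < z.1 ∧ a.2 < z.2 ∧ z.2 < b.2).exists_min_image
    (fun z => z.1) ⟨r0, by simp [hr0, h4, h5, h6]⟩
  simp only [Finset.mem_filter, and_imp] at hr hmin
  obtain ⟨hrX, hr1, hr2, hr3⟩ := hr
  have lt1 := R.lt1
  obtain ⟨p, q, hbl, hp, hq, h7, h8, h9, h10, key, g1, g2⟩ :=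
    blue_from R hrX (by linarith) hr2
  by_cases hpa : p.1 = a.1 ∧ p.2 = a.2
  · exact done_blue hbl hpa.1 hpa.2 (Or.inr (by linarith))
  have hS : ∀ z ∈ X, a.1 < z.1 → z.2 < a.2 → p.1 < z.1 := by
    intro z hz z1 z2
    have kz := key z hz
    by_contra hcon
    unfold OnI at kz
    grind
  have hS0 := hS s0 hs0 h1 h3
  have p2 : p.2 = a.2 := by
    have kd := key d R.hd
    have d1 := R.d1
    have d2 := R.d2
    unfold OnI at kd
    clear key hS hz
    grind
  have p1 : a.1 < p.1 := by
    rcases g1.lt_or_eq with h | h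
    · exact h
    · exact absurd ⟨h.symm, p2⟩ hpa
  exfalso
  rcases le_total e.1 p.1 with h | h
  · obtain ⟨z, hzX, z1, z2, z3⟩ := nc_hor hnc R.ha he e1 e2
    have := hS z hzX z1
    have := hz z hzX z1
    grind
  · obtain ⟨z, hzX, z1, z2, z3⟩ := nc_hor hnc R.ha hp p1 p2
    have := hS z hzX z1
    have := hz z hzX z1
    grind

theorem case_wide (hnc : NonCollinear X) (R : Rect X a b c d)
    (hS : ∀ z ∈ X, a.1 < z.1 → z.1 < b.1 → a.2 ≤ z.2)
    {w0 r0 : ℝ × ℝ} (hw0 : w0 ∈ X) (hr0 : r0 ∈ X)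
    (h1 : w0.1 < a.1) (h2 : a.2 < w0.2) (h3 : b.1 < r0.1)
    (h4 : r0.2 = w0.2) (h5 : r0.2 < b.2) : ∃ q ∈ X, q ≠ b ∧ Arrow X a q := by
  have lt1 := R.lt1
  have lt2 := R.lt2
  -- the left edge point
  have hL : (∃ q ∈ X, q ≠ b ∧ Arrow X a q) ∨ ∃ p ∈ X, p.1 = a.1 ∧ a.2 < p.2 ∧ p.2 < w0.2 := by
    obtain ⟨t, ht, t1, t2, t3⟩ := nc_hor hnc R.ha R.hd (by rw [R.d1]; exact lt1) R.d2
    rw [R.d1] at t2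
    have t4 : a.2 < t.2 := lt_of_le_of_ne (hS t ht t1 t2) (Ne.symm t3)
    obtain ⟨u, hu, hmin⟩ := (X.filter fun z => a.1 < z.1 ∧ a.2 < z.2).exists_min_image
      (fun z => z.1) ⟨t, by simp [ht, t1, t4]⟩
    simp only [Finset.mem_filter, and_imp] at hu hmin
    obtain ⟨huX, u1, u2⟩ := hu
    have ut := hmin t ht t1 t4
    obtain ⟨p, q, hbl, hp, hq, h7, h8, h9, h10, key, g1, g2⟩ := blue_from R huX u1 u2
    by_cases hpa : p.1 = a.1 ∧ p.2 = a.2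
    · exact Or.inl (done_blue hbl hpa.1 hpa.2 (Or.inl (by linarith)))
    have hmp := hmin p hp
    have p1 : p.1 = a.1 := by
      by_contra hcon
      have p1 : a.1 < p.1 := lt_of_le_of_ne g1 (Ne.symm hcon)
      have p2 : p.2 = a.2 := by grind
      obtain ⟨z, hzX, z1, z2, z3⟩ := nc_hor hnc R.ha hp p1 p2
      have := hmin z hzX z1
      have := hS z hzX z1
      grind
    have p2 : a.2 < p.2 := lt_of_le_of_ne g2 (fun h => hpa ⟨p1, h.symm⟩)
    refine Or.inr ⟨p, hp, p1, p2, ?_⟩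
    by_contra hcon
    have := key w0 hw0
    unfold OnI at this
    grind
  rcases hL with h | ⟨p, hp, p1, p2, p3⟩
  · exact h
  have hB : (∃ q ∈ X, q ≠ b ∧ Arrow X a q) ∨ ∃ e ∈ X, e.2 = a.2 ∧ a.1 < e.1 := by
    obtain ⟨v, hv, hmin⟩ := (X.filter fun z => a.1 < z.1 ∧ a.2 < z.2).exists_min_image
      (fun z => z.2) ⟨r0, by simp only [Finset.mem_filter]; exact ⟨hr0, by linarith, by linarith⟩⟩
    simp only [Finset.mem_filter, and_imp] at hv hmin
    obtain ⟨hvX, v1, v2⟩ := hv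
    have vt := hmin r0 hr0 (by linarith) (by linarith)
    obtain ⟨p, q, hbl, hp, hq, h7, h8, h9, h10, key, g1, g2⟩ := blue_from R hvX v1 v2
    by_cases hpa : p.1 = a.1 ∧ p.2 = a.2
    · exact Or.inl (done_blue hbl hpa.1 hpa.2 (Or.inr (by linarith)))
    have hmp := hmin p hp
    have p2 : p.2 = a.2 := by
      by_contra hcon
      have p2 : a.2 < p.2 := lt_of_le_of_ne g2 (Ne.symm hcon)
      have p1 : p.1 = a.1 := by grind
      obtain ⟨z, hzX, z1, z2, z3⟩ := nc_ver hnc R.ha hp p2 p1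
      have := hmin z hzX
      have kz := key z hzX
      unfold OnI at kz
      grind
    have p1 : a.1 < p.1 := lt_of_le_of_ne g1 (fun h => hpa ⟨h.symm, p2⟩)
    exact Or.inr ⟨p, hp, p2, p1⟩
  rcases hB with h | ⟨e, he, e2, e1⟩
  · exact h
  have eb : e.1 ≤ b.1 := by
    have := R.se e he
    grind
  obtain ⟨w, hw, hmin⟩ := (X.filter fun z => e.1 ≤ z.1 ∧ p.2 ≤ z.2).exists_min_image
    (fun z => z.2) ⟨r0, by simp only [Finset.mem_filter]; exact ⟨hr0, by linarith, by linarith⟩⟩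
  simp only [Finset.mem_filter, and_imp] at hw hmin
  obtain ⟨hwX, w1, w2⟩ := hw
  have wt := hmin r0 hr0 (by linarith) (by linarith)
  obtain ⟨p', q', hbl', hp', hq', h7', h8', h9', h10', key', g1', g2'⟩ :=
    blue_from R hwX (by linarith) (by linarith)
  have kp := key' p hp
  have ke := key' e he
  have hm := hmin p' hp'
  unfold OnI at kp ke
  clear key' hmin hS
  have e1 : p'.1 = a.1 := by grind
  have e2 : p'.2 = a.2 := by grind
  exact done_blue hbl' e1 e2 (Or.inr (by linarith))

/-- Two crossing rectangles. -/
def Tall (a b a' b' : ℝ × ℝ) : Prop := a.1 < a'.1 ∧ b'.1 < b.1 ∧ a'.2 < a.2 ∧ b.2 < b'.2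

theorem core {a' b' c' d' : ℝ × ℝ} (hnc : NonCollinear X) (R : Rect X a b c d)
    (R' : Rect X a' b' c' d') (h : Tall a b a' b' ∨ Tall a' b' a b) :
    ∃ q ∈ X, q ≠ b ∧ Arrow X a q := by
  have l1 := R'.lt1
  have l2 := R'.lt2
  rcases h with ⟨h1, h2, h3, h4⟩ | ⟨h1, h2, h3, h4⟩
  · exact case_SN R R'.ha h1 (by linarith) h3 R'.hb (by linarith) h2 h4
  · by_cases hS : ∀ z ∈ X, a.1 < z.1 → z.1 < b.1 → a.2 ≤ z.2
    · refine case_wide hnc R hS R'.ha R'.hd h1 h3 ?_ R'.d2 ?_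
      · rw [R'.d1]; exact h2
      · rw [R'.d2]; linarith
    · push Not at hS
      obtain ⟨s, hs, s1, s2, s3⟩ := hS
      refine case_SE hnc R hs s1 s2 s3 R'.hd ?_ ?_ ?_
      · rw [R'.d1]; exact h2
      · rw [R'.d2]; linarith
      · rw [R'.d2]; linarith

theorem rect_refl (R : Rect X a b c d) :
    Rect (reflX X) (refl2 c) (refl2 d) (refl2 a) (refl2 b) := by
  obtain ⟨ha, hb, hc, hd, c1, c2, d1, d2, lt1, lt2, sw, ne, nw, se⟩ := R
  have m : ∀ z ∈ X, refl2 z ∈ reflX X := fun z hz => by rwa [mem_reflX, refl2_refl2]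
  refine ⟨m _ hc, m _ hd, m _ ha, m _ hb, ?_, ?_, ?_, ?_, ?_, ?_, ?_, ?_, ?_, ?_⟩
  · simp [refl2, c1]
  · simp [refl2, d2]
  · simp [refl2, d1]
  · simp [refl2, c2]
  · simp [refl2, c1, d1, lt1]
  · simp [refl2, c2, d2, lt2]
  all_goals
    intro z hz
    rw [mem_reflX] at hz
    have h1 := sw _ hz
    have h2 := ne _ hz
    have h3 := nw _ hz
    have h4 := se _ hz
    simp only [refl2] at h1 h2 h3 h4 ⊢
    grind

theorem rect_of_arrows (hb : BlueArrow X a b) (hr : RedArrow X c d)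
    (he : lineThrough X a b = lineThrough X c d) : Rect X a b c d := by
  rw [blue_iff] at hb
  rw [red_iff] at hr
  obtain ⟨ha, hb, ⟨ab1, ab2⟩, -⟩ := hb
  obtain ⟨hc, hd, ⟨cd1, cd2⟩, -⟩ := hr
  have key : ∀ z ∈ X, OnI a b z ↔ OnD c d z := by
    intro z hz
    have e1 := mem_lineI X a b z ab1 ab2
    have e2 := mem_lineD X c d z cd1 cd2
    rw [he] at e1
    have e3 := e1.symm.trans e2
    simpa [hz, OnI, OnD] using e3
  have ka := key a ha
  have kb := key b hb
  have kc := key c hc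
  have kd := key d hd
  unfold OnI OnD at ka kb kc kd
  have h1 : a.1 ≤ c.1 ∧ a.2 ≤ c.2 ∧ a.1 ≤ d.1 ∧ a.2 ≤ d.2 := by
    clear key
    grind
  have h2 : c.1 ≤ b.1 ∧ c.2 ≤ b.2 ∧ d.1 ≤ b.1 ∧ d.2 ≤ b.2 := by
    clear key
    grind
  have h3 : c.1 = a.1 ∧ d.2 = a.2 ∧ d.1 = b.1 ∧ c.2 = b.2 := by
    clear key
    grind
  obtain ⟨e1, e2, e3, e4⟩ := h3
  refine ⟨ha, hb, hc, hd, e1, e4, e3, e2, ab1, ab2, ?_, ?_, ?_, ?_⟩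
  all_goals
    intro z hz z1 z2
    have := key z hz
    unfold OnI OnD at this
    grind

theorem rect_cross {a' b' c' d' : ℝ × ℝ} (R : Rect X a b c d) (R' : Rect X a' b' c' d')
    (h : ¬ (a = a' ∧ b = b')) : Tall a b a' b' ∨ Tall a' b' a b := by
  have h' : ¬ (a.1 = a'.1 ∧ a.2 = a'.2 ∧ b.1 = b'.1 ∧ b.2 = b'.2) := by
    rintro ⟨h1, h2, h3, h4⟩
    exact h ⟨Prod.ext h1 h2, Prod.ext h3 h4⟩
  have q : ∀ z ∈ X, (z.1 ≤ a.1 → z.2 ≤ a.2 → z.1 = a.1 ∧ z.2 = a.2) ∧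
    (b.1 ≤ z.1 → b.2 ≤ z.2 → z.1 = b.1 ∧ z.2 = b.2) ∧
    (z.1 ≤ a.1 → b.2 ≤ z.2 → z.1 = a.1 ∧ z.2 = b.2) ∧
    (b.1 ≤ z.1 → z.2 ≤ a.2 → z.1 = b.1 ∧ z.2 = a.2) :=
    fun z hz => ⟨R.sw z hz, R.ne z hz, R.nw z hz, R.se z hz⟩
  have q' : ∀ z ∈ X, (z.1 ≤ a'.1 → z.2 ≤ a'.2 → z.1 = a'.1 ∧ z.2 = a'.2) ∧
    (b'.1 ≤ z.1 → b'.2 ≤ z.2 → z.1 = b'.1 ∧ z.2 = b'.2) ∧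
    (z.1 ≤ a'.1 → b'.2 ≤ z.2 → z.1 = a'.1 ∧ z.2 = b'.2) ∧
    (b'.1 ≤ z.1 → z.2 ≤ a'.2 → z.1 = b'.1 ∧ z.2 = a'.2) :=
    fun z hz => ⟨R'.sw z hz, R'.ne z hz, R'.nw z hz, R'.se z hz⟩
  have qa := q a' R'.ha
  have qb := q b' R'.hb
  have qc := q c' R'.hc
  have qd := q d' R'.hd
  have qa' := q' a R.ha
  have qb' := q' b R.hb
  have qc' := q' c R.hc
  have qd' := q' d R.hd
  rw [R'.c1, R'.c2] at qc
  rw [R'.d1, R'.d2] at qd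
  rw [R.c1, R.c2] at qc'
  rw [R.d1, R.d2] at qd'
  have := R.lt1
  have := R.lt2
  have := R'.lt1
  have := R'.lt2
  clear q q' h
  unfold Tall
  by_contra hcon
  grind

end RectSection

/-- If `(aᵢ,bᵢ)` are blue arrows and `(cᵢ,dᵢ)` red arrows inducing the same
pairwise distinct lines (`k ≥ 2` of them), then each `aᵢ` is the start of an
arrow other than `(aᵢ,bᵢ)`, and each `cᵢ` is the start of an arrow other than
`(cᵢ,dᵢ)`. -/
theorem counting_extra_arrows (X : Finset (ℝ × ℝ)) (k : ℕ) (hk : 2 ≤ k)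
    (a b c d : Fin k → ℝ × ℝ)
    (hnc : NonCollinear X)
    (hblue : ∀ i, BlueArrow X (a i) (b i))
    (hred : ∀ i, RedArrow X (c i) (d i))
    (hsame : ∀ i, lineThrough X (a i) (b i) = lineThrough X (c i) (d i))
    (hdist : ∀ i j, i ≠ j → lineThrough X (a i) (b i) ≠ lineThrough X (a j) (b j)) :
    ∀ i, (∃ q ∈ X, q ≠ b i ∧ Arrow X (a i) q) ∧
      (∃ q' ∈ X, q' ≠ d i ∧ Arrow X (c i) q') := by

  have hR : ∀ i, Rect X (a i) (b i) (c i) (d i) := fun i =>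
    rect_of_arrows (hblue i) (hred i) (hsame i)
  intro i
  obtain ⟨j, hj⟩ : ∃ j : Fin k, i ≠ j := by
    have : Nontrivial (Fin k) := Fin.nontrivial_iff_two_le.2 hk
    obtain ⟨j, hj⟩ := exists_ne i
    exact ⟨j, hj.symm⟩
  have hcr : Tall (a i) (b i) (a j) (b j) ∨ Tall (a j) (b j) (a i) (b i) := by
    apply rect_cross (hR i) (hR j)
    rintro ⟨h1, h2⟩
    apply hdist i j hj
    rw [h1, h2]
  refine ⟨core hnc (hR i) (hR j) hcr, ?_⟩
  have hcr' : Tall (refl2 (c i)) (refl2 (d i)) (refl2 (c j)) (refl2 (d j)) ∨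
      Tall (refl2 (c j)) (refl2 (d j)) (refl2 (c i)) (refl2 (d i)) := by
    simp only [Tall, refl2, (hR i).c1, (hR i).c2, (hR i).d1, (hR i).d2, (hR j).c1, (hR j).c2,
      (hR j).d1, (hR j).d2, neg_lt_neg_iff]
    unfold Tall at hcr
    tauto
  obtain ⟨q, hq, hqd, harr⟩ := core (nc_refl hnc) (rect_refl (hR i)) (rect_refl (hR j)) hcr'
  refine ⟨refl2 q, mem_reflX.1 hq, ?_, arrow_refl harr⟩
  intro h
  apply hqd
  rw [← h, refl2_refl2]
end
end
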